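/- arXiv:2410.16761 — 4 statements merged into one kernel-verified Lean document; each statement's English description precedes it below -/
import Mathlib

section
/- Let B be a group with operators in a set A. Then the action of A on B is weakly s-unital if and only if for every nonempty subset S of B the equality ⟨S⟩ = [S] holds. -/
/-- A subgroup `C` of a group `B` with operators in `A` (acting by group
endomorphisms `act a`) is *stable* if it is closed under the action of `A`. -/
def IsStableSub {A B : Type*} [Group B] (act : A → B →* B) (C : Subgroup B) : Prop :=
  ∀ a : A, ∀ c ∈ C, act a c ∈ C

/-- The smallest stable subgroup `⟨S⟩` of `B` containing the set `S`. -/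
def stableClosure {A B : Type*} [Group B] (act : A → B →* B) (S : Set B) : Subgroup B :=
  sInf {C : Subgroup B | IsStableSub act C ∧ S ⊆ C}

/-- `opSetM act S n` is the set `Aⁿ S` of elements
`a₁ (a₂ (⋯ (aₙ s) ⋯))` with `a₁, …, aₙ ∈ A` and `s ∈ S` (and `A⁰ S = S`). -/
def opSetM {A B : Type*} [Group B] (act : A → B →* B) (S : Set B) : ℕ → Set B
  | 0 => S
  | n + 1 => {x | ∃ a : A, ∃ s ∈ opSetM act S n, x = act a s}

/-- `[S]` : the subgroup of `B` generated by the union of the sets `Aⁿ S`, `n ≥ 1`. -/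
def bracketM {A B : Type*} [Group B] (act : A → B →* B) (S : Set B) : Subgroup B :=
  Subgroup.closure (⋃ n : ℕ, opSetM act S (n + 1))

section

variable {A B : Type*} [Group B] {act : A → B →* B} {S T : Set B} {C : Subgroup B}

theorem subset_stableClosure : S ⊆ stableClosure act S :=
  fun _ hb => Subgroup.mem_sInf.2 fun _ hC => hC.2 hb

theorem IsStableSub.stableClosure_le (hC : IsStableSub act C) (hS : S ⊆ C) :
    stableClosure act S ≤ C :=
  sInf_le ⟨hC, hS⟩

theorem IsStableSub.opSetM_subset (hC : IsStableSub act C) (hS : S ⊆ C) (n : ℕ) :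
    opSetM act S n ⊆ C := by
  induction n with
  | zero => exact hS
  | succ n ih =>
    rintro _ ⟨a, s, hs, rfl⟩
    exact hC a s (ih hs)

theorem IsStableSub.bracketM_le (hC : IsStableSub act C) (hS : S ⊆ C) :
    bracketM act S ≤ C :=
  (Subgroup.closure_le C).2 <| Set.iUnion_subset fun n => hC.opSetM_subset hS (n + 1)

theorem bracketM_le_stableClosure : bracketM act S ≤ stableClosure act S :=
  le_sInf fun _ ⟨hC, hS⟩ => hC.bracketM_le hS

theorem opSetM_mono (hST : S ⊆ T) (n : ℕ) : opSetM act S n ⊆ opSetM act T n := by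
  induction n with
  | zero => exact hST
  | succ n ih =>
    rintro _ ⟨a, s, hs, rfl⟩
    exact ⟨a, s, ih hs, rfl⟩

theorem bracketM_mono (hST : S ⊆ T) : bracketM act S ≤ bracketM act T :=
  Subgroup.closure_mono <| Set.iUnion_mono fun n => opSetM_mono hST (n + 1)

theorem isStableSub_bracketM : IsStableSub act (bracketM act S) := by
  intro a
  suffices bracketM act S ≤ (bracketM act S).comap (act a) from fun _ hc => this hc
  refine (Subgroup.closure_le _).2 <| Set.iUnion_subset fun n x hx => ?_
  have hax : act a x ∈ opSetM act S (n + 2) := ⟨a, x, hx, rfl⟩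
  exact Subgroup.subset_closure <| Set.mem_iUnion_of_mem (n + 1) hax

theorem stableClosure_eq_bracketM_iff :
    stableClosure act S = bracketM act S ↔ S ⊆ bracketM act S where
  mp h := h ▸ subset_stableClosure
  mpr hS := le_antisymm (isStableSub_bracketM.stableClosure_le hS) bracketM_le_stableClosure

end

/-- Let `B` be a group with operators in a set `A`.  Then the
action of `A` on `B` is weakly s-unital (i.e. `b ∈ [{b}]` for every `b ∈ B`) if
and only if `⟨S⟩ = [S]` for every nonempty subset `S` of `B`. -/
theorem stmt6 {A B : Type*} [Group B] (act : A → B →* B) :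
    (∀ b : B, b ∈ bracketM act {b}) ↔
      ∀ S : Set B, S.Nonempty → stableClosure act S = bracketM act S := by
  constructor
  · intro h S _
    exact stableClosure_eq_bracketM_iff.2 fun b hb =>
      bracketM_mono (Set.singleton_subset_iff.2 hb) (h b)
  · intro h b
    exact stableClosure_eq_bracketM_iff.1 (h {b} (Set.singleton_nonempty b)) rfl
end

section
/- Let B be an abelian group and let σ_B and δ_B be additive endomorphisms of B. Then for all j, k, n ∈ ℕ the Vandermonde identity ∑_{i ∈ ℕ} π_i^k ∘ π_{j−i}^n = π_j^{k+n} holds as an equality of additive maps B → B (the sum is finite, since π_i^k = 0 for i > k and π_{j−i}^n = 0 for j − i > n, with the convention that terms with j − i < 0 are zero). -/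
/-- `words m k` : the words of length `m` in the two letters `σ` (encoded `true`)
and `δ` (encoded `false`) containing exactly `k` occurrences of `σ`. -/
def words (m k : ℕ) : Finset (Fin m → Bool) :=
  Finset.univ.filter fun w => (Finset.univ.filter fun t => w t = true).card = k

/-- Apply a word in the letters `σ`, `δ` to `x`, i.e. the composition of the
corresponding maps applied to `x`. -/
def wordApply {X : Type*} (σ δ : X → X) {m : ℕ} (w : Fin m → Bool) (x : X) : X :=
  (List.ofFn fun t => if w t then σ else δ).foldr (fun f y => f y) x

/-- `piFun σ δ i j` is the map `π_j^i : B → B`, the sum of all `binom(i,j)`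
compositions of `j` instances of `σ` and `i - j` instances of `δ`
(in particular it is `0` for `j > i` and the identity for `i = j = 0`). -/
def piFun {B : Type*} [AddCommMonoid B] (σ δ : B → B) (i j : ℕ) (b : B) : B :=
  ∑ w ∈ words i j, wordApply σ δ w b

/-!
A word of length `k + n` is a unique concatenation of a word of length `k` and one of length `n`,
and the numbers of letters `σ` in the two pieces add up. By additivity, `π_i^k ∘ π_l^n` is the sum
of all concatenations of a word of `π_i^k` with a word of `π_l^n`, so summing over `i + l = j` meets
each word of `π_j^{k+n}` exactly once.
-/

open Finset HasAntidiagonal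

section Words

variable {X : Type*} {k n : ℕ}

/-- The number of occurrences of the letter `σ`, encoded by `true`, in the word `w`. -/
def sigmaCount (w : Fin n → Bool) : ℕ := #{t | w t = true}

lemma mem_words {w : Fin n → Bool} {j : ℕ} : w ∈ words n j ↔ sigmaCount w = j := by
  simp [words, sigmaCount]

lemma sigmaCount_append (u : Fin k → Bool) (v : Fin n → Bool) :
    sigmaCount (Fin.append u v) = sigmaCount u + sigmaCount v := by
  simp only [sigmaCount, card_filter, Fin.sum_univ_add, Fin.append_left, Fin.append_right]

lemma words_product_words_eq_filter (p : ℕ × ℕ) :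
    words k p.1 ×ˢ words n p.2 =
      ({q | (sigmaCount q.1, sigmaCount q.2) = p} : Finset ((Fin k → Bool) × (Fin n → Bool))) := by
  ext q
  simp [mem_words, Prod.ext_iff]

lemma sum_words_add {M : Type*} [AddCommMonoid M] (j : ℕ) (f : (Fin (k + n) → Bool) → M) :
    ∑ w ∈ words (k + n) j, f w =
      ∑ p ∈ antidiagonal j, ∑ u ∈ words k p.1, ∑ v ∈ words n p.2, f (Fin.append u v) := by
  calc ∑ w ∈ words (k + n) j, f w
      = ∑ q : (Fin k → Bool) × (Fin n → Bool)
          with (sigmaCount q.1, sigmaCount q.2) ∈ antidiagonal j, f (Fin.append q.1 q.2) :=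
        (sum_equiv (Fin.appendEquiv k n)
          (by simp [Fin.appendEquiv, mem_words, sigmaCount_append]) fun _ _ ↦ rfl).symm
    _ = ∑ p ∈ antidiagonal j, ∑ q : (Fin k → Bool) × (Fin n → Bool)
          with (sigmaCount q.1, sigmaCount q.2) = p, f (Fin.append q.1 q.2) :=
        (sum_fiberwise_eq_sum_filter _ _ _ _).symm
    _ = ∑ p ∈ antidiagonal j, ∑ u ∈ words k p.1, ∑ v ∈ words n p.2, f (Fin.append u v) := by
        simp only [← sum_product', words_product_words_eq_filter]

lemma wordApply_append (σ δ : X → X) (u : Fin k → Bool) (v : Fin n → Bool) (x : X) :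
    wordApply σ δ (Fin.append u v) x = wordApply σ δ u (wordApply σ δ v x) := by
  simp [wordApply, List.ofFn_add]

lemma wordApply_cons (σ δ : X → X) (a : Bool) (w : Fin n → Bool) (x : X) :
    wordApply σ δ (Fin.cons a w : Fin (n + 1) → Bool) x =
      (if a then σ else δ) (wordApply σ δ w x) := by
  simp [wordApply, List.ofFn_succ]

end Words

section AddCommMonoid

variable {B : Type*} [AddCommMonoid B]

lemma wordApply_sum {ι : Type*} (σ δ : B →+ B) {m : ℕ} (w : Fin m → Bool) (s : Finset ι)
    (f : ι → B) : wordApply σ δ w (∑ i ∈ s, f i) = ∑ i ∈ s, wordApply σ δ w (f i) := by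
  induction w using Fin.consInduction with
  | elim0 => simp [wordApply]
  | cons a w ih => cases a <;> simp [wordApply_cons, ih]

lemma piFun_piFun (σ δ : B →+ B) (k n i l : ℕ) (b : B) :
    piFun σ δ k i (piFun σ δ n l b) =
      ∑ u ∈ words k i, ∑ v ∈ words n l, wordApply σ δ (Fin.append u v) b := by
  simp only [piFun, wordApply_sum, wordApply_append]

theorem stmt7_general (σ δ : B →+ B) (j k n : ℕ) (b : B) :
    ∑ i ∈ range (j + 1), piFun σ δ k i (piFun σ δ n (j - i) b) = piFun σ δ (k + n) j b := by
  calc ∑ i ∈ range (j + 1), piFun σ δ k i (piFun σ δ n (j - i) b)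
      = ∑ p ∈ antidiagonal j, piFun σ δ k p.1 (piFun σ δ n p.2 b) :=
        (Nat.sum_antidiagonal_eq_sum_range_succ (fun i l ↦ piFun σ δ k i (piFun σ δ n l b)) j).symm
    _ = ∑ p ∈ antidiagonal j, ∑ u ∈ words k p.1, ∑ v ∈ words n p.2,
          wordApply σ δ (Fin.append u v) b := by
        simp only [piFun_piFun]
    _ = piFun σ δ (k + n) j b := (sum_words_add j fun w ↦ wordApply σ δ w b).symm

end AddCommMonoid

/-- Vandermonde's identity: for additive endomorphisms `σ`, `δ` of
an abelian group `B` and all `j k n : ℕ`,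
`∑_{i} π_i^k ∘ π_{j-i}^n = π_j^{k+n}` (only the terms with `i ≤ j` can be
nonzero, so the sum is taken over `0 ≤ i ≤ j`; terms with `i > k` or
`j - i > n` vanish since the corresponding `π` maps are zero). -/
theorem stmt7 {B : Type*} [AddCommGroup B] (σ δ : B →+ B) (j k n : ℕ) (b : B) :
    ∑ i ∈ Finset.range (j + 1), piFun ⇑σ ⇑δ k i (piFun ⇑σ ⇑δ n (j - i) b) =
      piFun ⇑σ ⇑δ (k + n) j b := by
  exact stmt7_general σ δ j k n b
end

section
/- Let B be an abelian group with operators in a set A and let S be a nonempty subset of B. Then ⟨S⟩ = ∑_{n ∈ ℕ} ℤ(Aⁿ S) and [S] = ∑_{n ≥ 1} ℤ(Aⁿ S). Moreover, the action of A on B is weakly s-unital if and only if for every nonempty subset S of B the equality ⟨S⟩ = ∑_{n ≥ 1} ℤ(Aⁿ S) holds. -/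
/-- `opSet act S n` is the set `Aⁿ S` of elements
`a₁ (a₂ (⋯ (aₙ s) ⋯))` with `a₁, …, aₙ ∈ A` and `s ∈ S` (and `A⁰ S = S`). -/
def opSet {A B : Type*} (act : A → B → B) (S : Set B) : ℕ → Set B
  | 0 => S
  | n + 1 => {x | ∃ a : A, ∃ s ∈ opSet act S n, x = act a s}

/-- A subgroup of an abelian group `B` with operators in `A` is *stable* if it
is closed under the action of `A`. -/
def IsStableAdd {A B : Type*} [AddGroup B] (act : A → B → B) (C : AddSubgroup B) : Prop :=
  ∀ a : A, ∀ b ∈ C, act a b ∈ C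

/-- The smallest stable subgroup `⟨S⟩` of `B` containing the set `S`. -/
def stableClosureAdd {A B : Type*} [AddGroup B] (act : A → B → B) (S : Set B) : AddSubgroup B :=
  sInf {C : AddSubgroup B | IsStableAdd act C ∧ S ⊆ C}

/-- `[S]` : the subgroup of `B` generated by the union of the sets `Aⁿ S`, `n ≥ 1`. -/
def bracketAdd {A B : Type*} [AddGroup B] (act : A → B → B) (S : Set B) : AddSubgroup B :=
  AddSubgroup.closure (⋃ n : ℕ, opSet act S (n + 1))

/-- A group `B` with operators in `A` is *stably Noetherian* if every ascending
chain of stable subgroups of `B` eventually stabilizes. -/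
def StablyNoetherianAdd {A B : Type*} [AddGroup B] (act : A → B → B) : Prop :=
  ∀ f : ℕ → AddSubgroup B, (∀ n, IsStableAdd act (f n)) → Monotone f →
    ∃ N : ℕ, ∀ n : ℕ, N ≤ n → f n = f N

/- Applying an operator sends `Aⁿ S` into `Aⁿ⁺¹ S`, so by additivity the subgroup generated by all
`Aⁿ S` with `n ≥ k` is stable, for every `k`. For `k = 0` it is `⟨S⟩`; for `k = 1` it is `[S]`,
which is contained in `⟨S⟩` and is therefore equal to it exactly when `S ⊆ [S]`. Since `[·]` is
monotone, the inclusion holds for all `S` as soon as it holds for singletons. -/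

section Operators

variable {A B : Type*} {act : A → B → B} {S T : Set B}

theorem act_mem_opSet_succ {n : ℕ} {b : B} (a : A) (hb : b ∈ opSet act S n) :
    act a b ∈ opSet act S (n + 1) :=
  ⟨a, b, hb, rfl⟩

theorem opSet_mono (h : S ⊆ T) (n : ℕ) : opSet act S n ⊆ opSet act T n := by
  induction n with
  | zero => exact h
  | succ n ih =>
    rintro _ ⟨a, s, hs, rfl⟩
    exact act_mem_opSet_succ a (ih hs)

variable [AddGroup B]

theorem IsStableAdd.opSet_subset {C : AddSubgroup B} (hC : IsStableAdd act C) (hS : S ⊆ C)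
    (n : ℕ) : opSet act S n ⊆ C := by
  induction n with
  | zero => exact hS
  | succ n ih =>
    rintro _ ⟨a, s, hs, rfl⟩
    exact hC a s (ih hs)

theorem isStableAdd_closure (hadd : ∀ (a : A) (b₁ b₂ : B), act a (b₁ + b₂) = act a b₁ + act a b₂)
    (hT : ∀ a, ∀ b ∈ T, act a b ∈ AddSubgroup.closure T) :
    IsStableAdd act (AddSubgroup.closure T) := by
  intro a
  have closure_le_comap : AddSubgroup.closure T ≤
      (AddSubgroup.closure T).comap (AddMonoidHom.mk' (act a) (hadd a)) :=
    (AddSubgroup.closure_le _).2 (hT a)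
  exact fun b hb => closure_le_comap hb

theorem isStableAdd_closure_iUnion_opSet_add
    (hadd : ∀ (a : A) (b₁ b₂ : B), act a (b₁ + b₂) = act a b₁ + act a b₂) (S : Set B) (k : ℕ) :
    IsStableAdd act (AddSubgroup.closure (⋃ n : ℕ, opSet act S (n + k))) := by
  refine isStableAdd_closure hadd fun a b hb => ?_
  obtain ⟨n, hn⟩ := Set.mem_iUnion.1 hb
  have act_mem : act a b ∈ opSet act S (n + 1 + k) :=
    Nat.add_right_comm n k 1 ▸ act_mem_opSet_succ a hn
  exact AddSubgroup.subset_closure (Set.mem_iUnion_of_mem (n + 1) act_mem)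

theorem stableClosureAdd_le {C : AddSubgroup B} (hC : IsStableAdd act C) (hS : S ⊆ C) :
    stableClosureAdd act S ≤ C :=
  sInf_le ⟨hC, hS⟩

theorem subset_stableClosureAdd (act : A → B → B) (S : Set B) : S ⊆ stableClosureAdd act S :=
  fun _ hs => AddSubgroup.mem_sInf.2 fun _ hC => hC.2 hs

theorem isStableAdd_stableClosureAdd (act : A → B → B) (S : Set B) :
    IsStableAdd act (stableClosureAdd act S) :=
  fun a b hb => AddSubgroup.mem_sInf.2 fun C hC => hC.1 a b (AddSubgroup.mem_sInf.1 hb C hC)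

theorem opSet_subset_stableClosureAdd (act : A → B → B) (S : Set B) (n : ℕ) :
    opSet act S n ⊆ stableClosureAdd act S :=
  (isStableAdd_stableClosureAdd act S).opSet_subset (subset_stableClosureAdd act S) n

theorem stableClosureAdd_eq_iSup_closure_opSet
    (hadd : ∀ (a : A) (b₁ b₂ : B), act a (b₁ + b₂) = act a b₁ + act a b₂) (S : Set B) :
    stableClosureAdd act S = ⨆ n : ℕ, AddSubgroup.closure (opSet act S n) := by
  refine le_antisymm ?_ <|
    iSup_le fun n => (AddSubgroup.closure_le _).2 (opSet_subset_stableClosureAdd act S n)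
  rw [← AddSubgroup.closure_iUnion]
  exact stableClosureAdd_le (isStableAdd_closure_iUnion_opSet_add hadd S 0)
    ((Set.subset_iUnion (opSet act S) 0).trans AddSubgroup.subset_closure)

theorem bracketAdd_eq_iSup_closure_opSet (act : A → B → B) (S : Set B) :
    bracketAdd act S = ⨆ n : ℕ, AddSubgroup.closure (opSet act S (n + 1)) :=
  AddSubgroup.closure_iUnion _

theorem bracketAdd_mono (h : S ⊆ T) : bracketAdd act S ≤ bracketAdd act T :=
  AddSubgroup.closure_mono (Set.iUnion_mono fun n => opSet_mono h (n + 1))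

theorem bracketAdd_le_stableClosureAdd (act : A → B → B) (S : Set B) :
    bracketAdd act S ≤ stableClosureAdd act S :=
  (AddSubgroup.closure_le _).2 <|
    Set.iUnion_subset fun n => opSet_subset_stableClosureAdd act S (n + 1)

theorem stableClosureAdd_eq_bracketAdd_iff
    (hadd : ∀ (a : A) (b₁ b₂ : B), act a (b₁ + b₂) = act a b₁ + act a b₂) :
    stableClosureAdd act S = bracketAdd act S ↔ S ⊆ bracketAdd act S where
  mp h := h ▸ subset_stableClosureAdd act S
  mpr h := le_antisymm (stableClosureAdd_le (isStableAdd_closure_iUnion_opSet_add hadd S 1) h)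
    (bracketAdd_le_stableClosureAdd act S)

/-- The action of `A` on `B` is *weakly s-unital* if `b ∈ [{b}]` for every `b ∈ B`. -/
def IsWeaklySUnitalAdd (act : A → B → B) : Prop :=
  ∀ b : B, b ∈ bracketAdd act {b}

theorem IsWeaklySUnitalAdd.subset_bracketAdd (h : IsWeaklySUnitalAdd act) (S : Set B) :
    S ⊆ bracketAdd act S :=
  fun b hb => bracketAdd_mono (Set.singleton_subset_iff.2 hb) (h b)

theorem isWeaklySUnitalAdd_iff_stableClosureAdd_eq_bracketAdd
    (hadd : ∀ (a : A) (b₁ b₂ : B), act a (b₁ + b₂) = act a b₁ + act a b₂) :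
    IsWeaklySUnitalAdd act ↔
      ∀ S : Set B, S.Nonempty → stableClosureAdd act S = bracketAdd act S where
  mp h S _ := (stableClosureAdd_eq_bracketAdd_iff hadd).2 (h.subset_bracketAdd S)
  mpr h b := (stableClosureAdd_eq_bracketAdd_iff hadd).1 (h {b} (Set.singleton_nonempty b)) rfl

theorem stmt12_general (act : A → B → B)
    (hadd : ∀ (a : A) (b₁ b₂ : B), act a (b₁ + b₂) = act a b₁ + act a b₂) :
    (∀ S : Set B,
        stableClosureAdd act S = ⨆ n : ℕ, AddSubgroup.closure (opSet act S n)) ∧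
    (∀ S : Set B,
        bracketAdd act S = ⨆ n : ℕ, AddSubgroup.closure (opSet act S (n + 1))) ∧
    (IsWeaklySUnitalAdd act ↔
      ∀ S : Set B, S.Nonempty →
        stableClosureAdd act S = ⨆ n : ℕ, AddSubgroup.closure (opSet act S (n + 1))) := by
  refine ⟨stableClosureAdd_eq_iSup_closure_opSet hadd, bracketAdd_eq_iSup_closure_opSet act, ?_⟩
  simpa only [bracketAdd_eq_iSup_closure_opSet] using
    isWeaklySUnitalAdd_iff_stableClosureAdd_eq_bracketAdd hadd

end Operators

/-- Let `B` be an abelian group with operators in a set `A` (each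
`a ∈ A` acting additively) and let `S` be a nonempty subset of `B`.  Then
`⟨S⟩ = ∑_{n ∈ ℕ} ℤ(Aⁿ S)` and `[S] = ∑_{n ≥ 1} ℤ(Aⁿ S)` (the sum of the
subgroups `ℤ(Aⁿ S)` generated by the sets `Aⁿ S` is their supremum).  Moreover,
the action of `A` on `B` is weakly s-unital if and only if
`⟨S⟩ = ∑_{n ≥ 1} ℤ(Aⁿ S)` for every nonempty subset `S` of `B`. -/
theorem stmt12 {A B : Type*} [AddCommGroup B] (act : A → B → B)
    (hadd : ∀ (a : A) (b₁ b₂ : B), act a (b₁ + b₂) = act a b₁ + act a b₂) :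
    (∀ S : Set B, S.Nonempty →
        stableClosureAdd act S = ⨆ n : ℕ, AddSubgroup.closure (opSet act S n)) ∧
    (∀ S : Set B, S.Nonempty →
        bracketAdd act S = ⨆ n : ℕ, AddSubgroup.closure (opSet act S (n + 1))) ∧
    ((∀ b : B, b ∈ bracketAdd act {b}) ↔
      ∀ S : Set B, S.Nonempty →
        stableClosureAdd act S = ⨆ n : ℕ, AddSubgroup.closure (opSet act S (n + 1))) :=
  have ⟨stableClosure_eq, bracket_eq, sUnital_iff⟩ := stmt12_general act hadd
  ⟨fun S _ => stableClosure_eq S, fun S _ => bracket_eq S, sUnital_iff⟩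
end

section
/- Let B[x;σ_B,δ_B] be an Ore group extension of an abelian group B with operators in a set A with zero element ε. Suppose that B is stably Noetherian, that the action of A on B is weakly s-unital, and that σ_B is a surjective A-stable additive endomorphism of B. Then B[x;σ_B,δ_B], seen as a group with operators in A[x], is stably Noetherian. -/
/-- The Ore action of a polynomial `α = ∑ aᵢ xⁱ` over the operator set `A` on a
polynomial `β = ∑ bⱼ xʲ` over the abelian group `B` (polynomials are encoded as
finitely supported functions `ℕ →₀ _`), given by
`α β = ∑_{i,j,k} (aᵢ • π_k^i(bⱼ)) x^{k+j}`, where the maps `π_k^i` are built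
from `σ` and `δ` (only the terms with `k ≤ i` can be nonzero). -/
noncomputable def oreAct {A B : Type*} [Zero A] [AddCommGroup B] (act : A → B → B) (σ δ : B → B)
    (α : ℕ →₀ A) (β : ℕ →₀ B) : ℕ →₀ B :=
  α.sum fun i a => β.sum fun j b =>
    ∑ k ∈ Finset.range (i + 1), Finsupp.single (k + j) (act a (piFun σ δ i k b))

/-!
Send a stable subgroup `I` of `B[x;σ,δ]` to the sequence `C_d(I) = (σ ^ d)⁻¹(L_d(I))`, where
`L_d(I)` is the group of coefficients of `x ^ d` in the elements of `I` of degree at most `d`.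
If `β` has leading term `b x ^ d`, the coefficient of `x ^ (i + d)` in `(a x ^ i) β` is
`a σ ^ i(b)`, and all higher ones vanish. Hence each `L_d(I)` is stable, and `L_{d+1}(I)` contains
`a σ(b)` for all `b ∈ L_d(I)` and thus, by weak s-unitality, `σ(b)` itself. So `d ↦ C_d(I)` is an
increasing sequence of stable subgroups of `B`. As `σ` is surjective, `C_d(I)` determines `L_d(I)`;
since `I ≤ J` with `L_d(I) = L_d(J)` for all `d` are equal, `I ↦ C(I)` is strictly monotone.
Finally, monotone sequences in an order with the ascending chain condition satisfy it themselves: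
if `f₀ < f₁ < ⋯`, pick `dₙ` with `fₙ(dₙ) < fₙ₊₁(dₙ)`; along a subsequence on which `dₙ` is
monotone, the values `fₙ(dₙ)` are strictly increasing.
-/

/-- `A`-stability of a map `f`, which makes the preimages of stable subgroups under `f` stable.
The operator `a'` may depend on `b` as well as on `a`. -/
def IsStableMap {A B : Type*} (act : A → B → B) (f : B → B) : Prop :=
  ∀ a b, ∃ a', f (act a b) = act a' (f b)

/-- The stable subgroups of a group with operators, ordered by inclusion. They are bundled as a
subtype so that stable Noetherianity becomes a `WellFoundedGT` instance. -/
abbrev StableSubgroup {A B : Type*} [AddGroup B] (act : A → B → B) : Type _ :=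
  {C : AddSubgroup B // IsStableAdd act C}

theorem wellFoundedGT_orderHom {ι α : Type*} [Preorder ι] [WellQuasiOrderedLE ι] [Preorder α]
    [WellFoundedGT α] : WellFoundedGT (ι →o α) := by
  refine ⟨wellFounded_iff_isEmpty_descending_chain.2 ⟨fun ⟨f, hf⟩ => ?_⟩⟩
  have hf_mono : StrictMono f := strictMono_nat_of_lt_succ hf
  have exists_not_le (n : ℕ) : ∃ d, ¬ f (n + 1) d ≤ f n d := by
    simpa only [OrderHom.le_def, not_forall] using (hf n).not_ge
  choose d hd using exists_not_le
  obtain ⟨g, hg⟩ := wellQuasiOrdered_le.exists_monotone_subseq d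
  refine not_strictMono_of_wellFoundedGT (fun n => f (g n) (d (g n)))
    (strictMono_nat_of_lt_succ fun n => ?_)
  calc f (g n) (d (g n))
      < f (g n + 1) (d (g n)) := lt_of_le_not_ge ((hf (g n)).le _) (hd _)
    _ ≤ f (g (n + 1)) (d (g n)) := hf_mono.monotone (g.strictMono n.lt_succ_self) _
    _ ≤ f (g (n + 1)) (d (g (n + 1))) := (f _).monotone (hg _ _ n.le_succ)

section StableSubgroups

variable {A B : Type*} {act : A → B → B}

theorem stablyNoetherianAdd_iff_wellFoundedGT [AddGroup B] :
    StablyNoetherianAdd act ↔ WellFoundedGT (StableSubgroup act) := by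
  rw [wellFoundedGT_iff_monotone_chain_condition]
  constructor
  · intro h f
    obtain ⟨N, hN⟩ := h (fun n => f n) (fun n => (f n).2) fun _ _ hmn => f.monotone hmn
    exact ⟨N, fun n hn => Subtype.ext (hN n hn).symm⟩
  · intro h f hf hmono
    obtain ⟨N, hN⟩ := h ⟨fun n => ⟨f n, hf n⟩, hmono⟩
    exact ⟨N, fun n hn => congrArg Subtype.val (hN n hn).symm⟩

theorem IsStableMap.iterate {f : B → B} (hf : IsStableMap act f) (n : ℕ) :
    IsStableMap act f^[n] := by
  induction n with
  | zero => exact fun a b => ⟨a, rfl⟩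
  | succ n ih =>
    intro a b
    obtain ⟨a₁, h₁⟩ := hf a b
    obtain ⟨a₂, h₂⟩ := ih a₁ (f b)
    exact ⟨a₂, by rw [Function.iterate_succ_apply, h₁, h₂, Function.iterate_succ_apply]⟩

theorem IsStableAdd.comap [AddGroup B] {C : AddSubgroup B} (hC : IsStableAdd act C) {f : B →+ B}
    (hf : IsStableMap act f) : IsStableAdd act (C.comap f) := by
  intro a b hb
  obtain ⟨a', ha'⟩ := hf a b
  rw [AddSubgroup.mem_comap, ha']
  exact hC a' _ hb

theorem IsStableAdd.bracketAdd_le [AddGroup B] {C : AddSubgroup B} (hC : IsStableAdd act C)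
    {S : Set B} (hS : ∀ a, ∀ s ∈ S, act a s ∈ C) : bracketAdd act S ≤ C := by
  have opSet_subset (n : ℕ) : opSet act S (n + 1) ⊆ C := by
    induction n with
    | zero =>
      rintro _ ⟨a, s, hs, rfl⟩
      exact hS a s hs
    | succ n ih =>
      rintro _ ⟨a, s, hs, rfl⟩
      exact hC a s (ih hs)
  exact (AddSubgroup.closure_le C).2 (Set.iUnion_subset opSet_subset)

end StableSubgroups

section OreAction

theorem words_self (m : ℕ) : words m m = {fun _ => true} := by
  ext w
  simpa [words, funext_iff] using
    Finset.card_filter_eq_iff (s := Finset.univ) (p := fun t => w t = true)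

theorem wordApply_const_true {X : Type*} (σ δ : X → X) (m : ℕ) :
    wordApply σ δ (fun _ : Fin m => true) = σ^[m] := by
  induction m with
  | zero => rfl
  | succ m ih =>
    funext x
    rw [Function.iterate_succ_apply', ← ih]
    simp [wordApply]

theorem piFun_self {B : Type*} [AddCommMonoid B] (σ δ : B → B) (i : ℕ) (b : B) :
    piFun σ δ i i b = σ^[i] b := by
  rw [piFun, words_self, Finset.sum_singleton, wordApply_const_true]

variable {A B : Type*} [Zero A] [AddCommGroup B] {act : A → B → B} (σ δ : B → B)

theorem oreAct_single_apply (hε : ∀ b, act 0 b = 0) (i : ℕ) (a : A) (β : ℕ →₀ B) (n : ℕ) :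
    oreAct act σ δ (Finsupp.single i a) β n =
      ∑ j ∈ β.support, ∑ k ∈ Finset.range (i + 1),
        if k + j = n then act a (piFun σ δ i k (β j)) else 0 := by
  rw [oreAct, Finsupp.sum_single_index (by simp [hε]), Finsupp.sum_apply, Finsupp.sum]
  simp only [Finsupp.finsetSum_apply, Finsupp.single_apply]

theorem oreAct_single_apply_eq_zero (hε : ∀ b, act 0 b = 0) (i : ℕ) (a : A) {β : ℕ →₀ B} {d : ℕ}
    (hβ : ∀ j, d < j → β j = 0) {n : ℕ} (hn : i + d < n) :
    oreAct act σ δ (Finsupp.single i a) β n = 0 := by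
  rw [oreAct_single_apply σ δ hε]
  refine Finset.sum_eq_zero fun j hj => Finset.sum_eq_zero fun k hk => if_neg ?_
  have hjd : j ≤ d := not_lt.1 fun h => Finsupp.mem_support_iff.1 hj (hβ j h)
  have hki : k < i + 1 := Finset.mem_range.1 hk
  omega

theorem oreAct_single_apply_add (hε : ∀ b, act 0 b = 0) (i : ℕ) (a : A) {β : ℕ →₀ B} {d : ℕ}
    (hβ : ∀ j, d < j → β j = 0) (hβd : β d ≠ 0) :
    oreAct act σ δ (Finsupp.single i a) β (i + d) = act a (σ^[i] (β d)) := by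
  have eq_of_add_eq {j k : ℕ} (hj : j ∈ β.support) (hk : k ∈ Finset.range (i + 1))
      (h : k + j = i + d) : j = d := by
    have hjd : j ≤ d := not_lt.1 fun h => Finsupp.mem_support_iff.1 hj (hβ j h)
    have hki : k < i + 1 := Finset.mem_range.1 hk
    omega
  rw [oreAct_single_apply σ δ hε, Finset.sum_eq_single_of_mem d (Finsupp.mem_support_iff.2 hβd),
    Finset.sum_eq_single_of_mem i (Finset.self_mem_range_succ i), if_pos rfl, piFun_self]
  · exact fun k _ hki => if_neg fun h => hki (Nat.add_right_cancel h)
  · exact fun j hj hjd => Finset.sum_eq_zero fun k hk => if_neg fun h => hjd (eq_of_add_eq hj hk h)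

end OreAction

section LeadingCoefficients

variable {B : Type*} [AddCommGroup B] {I J : AddSubgroup (ℕ →₀ B)} {d : ℕ} {b : B}

/-- The coefficients of `x ^ d` in the polynomials of degree at most `d` in `I`, i.e. `0` and the
leading coefficients of the polynomials of degree exactly `d` in `I`. -/
noncomputable def leadingCoeffNth (I : AddSubgroup (ℕ →₀ B)) (d : ℕ) : AddSubgroup B :=
  ((Finsupp.supported B ℤ (Set.Iic d)).toAddSubgroup ⊓ I).map (Finsupp.applyAddHom d)

theorem mem_leadingCoeffNth :
    b ∈ leadingCoeffNth I d ↔ ∃ β ∈ I, (∀ j, d < j → β j = 0) ∧ β d = b := by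
  simp only [leadingCoeffNth, AddSubgroup.mem_map, AddSubgroup.mem_inf,
    Submodule.mem_toAddSubgroup, Finsupp.mem_supported', Set.mem_Iic, not_le,
    Finsupp.applyAddHom_apply, and_assoc, and_left_comm]

theorem leadingCoeffNth_mono (hIJ : I ≤ J) (d : ℕ) : leadingCoeffNth I d ≤ leadingCoeffNth J d :=
  AddSubgroup.map_mono (inf_le_inf_left _ hIJ)

theorem le_of_leadingCoeffNth_le (hIJ : I ≤ J)
    (hlead : ∀ d, leadingCoeffNth J d ≤ leadingCoeffNth I d) : J ≤ I := by
  have mem_of_bound (n : ℕ) : ∀ β ∈ J, (∀ j, n ≤ j → β j = 0) → β ∈ I := by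
    induction n with
    | zero =>
      intro β _ hβ
      obtain rfl : β = 0 := Finsupp.ext fun j => hβ j j.zero_le
      exact I.zero_mem
    | succ d ih =>
      intro β hβJ hβ
      obtain ⟨γ, hγI, hγ, hγd⟩ :=
        mem_leadingCoeffNth.1 (hlead d (mem_leadingCoeffNth.2 ⟨β, hβJ, hβ, rfl⟩))
      have sub_mem : β - γ ∈ I := by
        refine ih _ (J.sub_mem hβJ (hIJ hγI)) fun j hj => ?_
        rcases hj.eq_or_lt with rfl | hdj
        · rw [Finsupp.sub_apply, hγd, sub_self]
        · rw [Finsupp.sub_apply, hβ j hdj, hγ j hdj, sub_self]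
      exact sub_add_cancel β γ ▸ I.add_mem sub_mem hγI
  intro β hβJ
  obtain ⟨n, hn⟩ := β.support.exists_nat_subset_range
  refine mem_of_bound n β hβJ fun j hj => Finsupp.notMem_support_iff.1 fun hjβ => ?_
  exact hj.not_gt (Finset.mem_range.1 (hn hjβ))

/-- The elements `b` such that `σ ^ d` maps `b` to a leading coefficient of `I` in degree `d`.
Since multiplication by `x` acts on leading coefficients through `σ`, it is these preimages, not
the groups `leadingCoeffNth I d`, that increase with `d`. -/
noncomputable def untwistedLeadingCoeffNth (σ : AddMonoid.End B) (I : AddSubgroup (ℕ →₀ B))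
    (d : ℕ) : AddSubgroup B :=
  (leadingCoeffNth I d).comap (σ ^ d)

theorem mem_untwistedLeadingCoeffNth {σ : AddMonoid.End B} :
    b ∈ untwistedLeadingCoeffNth σ I d ↔ σ^[d] b ∈ leadingCoeffNth I d :=
  Iff.rfl

theorem untwistedLeadingCoeffNth_mono (σ : AddMonoid.End B) (hIJ : I ≤ J) (d : ℕ) :
    untwistedLeadingCoeffNth σ I d ≤ untwistedLeadingCoeffNth σ J d :=
  AddSubgroup.comap_mono (leadingCoeffNth_mono hIJ d)

theorem le_of_untwistedLeadingCoeffNth_le {σ : AddMonoid.End B} (hσ : Function.Surjective σ)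
    (hIJ : I ≤ J)
    (hlead : ∀ d, untwistedLeadingCoeffNth σ J d ≤ untwistedLeadingCoeffNth σ I d) : J ≤ I :=
  le_of_leadingCoeffNth_le hIJ fun d =>
    (AddSubgroup.comap_le_comap_of_surjective (hσ.iterate d)).1 (hlead d)

end LeadingCoefficients

section StableLeadingCoefficients

variable {A B : Type*} [Zero A] [AddCommGroup B] {act : A → B → B} {σ : AddMonoid.End B}
  {δ : B → B} {I : AddSubgroup (ℕ →₀ B)}

theorem act_iterate_mem_leadingCoeffNth (hI : IsStableAdd (oreAct act σ δ) I)
    (hε : ∀ b, act 0 b = 0) (hact : ∀ a, act a 0 = 0) {d : ℕ} {b : B}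
    (hb : b ∈ leadingCoeffNth I d) (i : ℕ) (a : A) :
    act a (σ^[i] b) ∈ leadingCoeffNth I (i + d) := by
  obtain ⟨β, hβI, hβ, rfl⟩ := mem_leadingCoeffNth.1 hb
  by_cases hβd : β d = 0
  · rw [hβd, iterate_map_zero, hact]
    exact zero_mem _
  · exact mem_leadingCoeffNth.2 ⟨oreAct act σ δ (Finsupp.single i a) β, hI _ β hβI,
      fun _ => oreAct_single_apply_eq_zero σ δ hε i a hβ, oreAct_single_apply_add σ δ hε i a hβ hβd⟩

theorem isStableAdd_leadingCoeffNth (hI : IsStableAdd (oreAct act σ δ) I)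
    (hε : ∀ b, act 0 b = 0) (hact : ∀ a, act a 0 = 0) (d : ℕ) :
    IsStableAdd act (leadingCoeffNth I d) := fun a b hb => by
  simpa only [Function.iterate_zero_apply, zero_add] using
    act_iterate_mem_leadingCoeffNth hI hε hact hb 0 a

theorem iterate_mem_leadingCoeffNth (hI : IsStableAdd (oreAct act σ δ) I)
    (hε : ∀ b, act 0 b = 0) (hact : ∀ a, act a 0 = 0) (hwsu : ∀ b, b ∈ bracketAdd act {b})
    {d : ℕ} {b : B} (hb : b ∈ leadingCoeffNth I d) (i : ℕ) :
    σ^[i] b ∈ leadingCoeffNth I (i + d) := by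
  refine (isStableAdd_leadingCoeffNth hI hε hact (i + d)).bracketAdd_le ?_ (hwsu (σ^[i] b))
  rintro a _ rfl
  exact act_iterate_mem_leadingCoeffNth hI hε hact hb i a

theorem isStableAdd_untwistedLeadingCoeffNth (hI : IsStableAdd (oreAct act σ δ) I)
    (hε : ∀ b, act 0 b = 0) (hact : ∀ a, act a 0 = 0) (hσ : IsStableMap act σ) (d : ℕ) :
    IsStableAdd act (untwistedLeadingCoeffNth σ I d) :=
  (isStableAdd_leadingCoeffNth hI hε hact d).comap (hσ.iterate d)

theorem monotone_untwistedLeadingCoeffNth (hI : IsStableAdd (oreAct act σ δ) I)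
    (hε : ∀ b, act 0 b = 0) (hact : ∀ a, act a 0 = 0) (hwsu : ∀ b, b ∈ bracketAdd act {b}) :
    Monotone (untwistedLeadingCoeffNth σ I) := by
  refine monotone_nat_of_le_succ fun d b hb => ?_
  rw [mem_untwistedLeadingCoeffNth] at hb ⊢
  rw [Function.iterate_succ_apply', add_comm d 1]
  exact iterate_mem_leadingCoeffNth hI hε hact hwsu hb 1

end StableLeadingCoefficients

theorem stmt14_general {A B : Type*} [Zero A] [AddCommGroup B] (act : A → B → B)
    (hact : ∀ a, act a 0 = 0) (hε : ∀ b, act 0 b = 0) (σ : B →+ B) (δ : B → B)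
    (hNoeth : StablyNoetherianAdd act) (hwsu : ∀ b, b ∈ bracketAdd act {b})
    (hsurj : Function.Surjective σ) (hstable : IsStableMap act σ) :
    StablyNoetherianAdd (oreAct act σ δ) := by
  rw [stablyNoetherianAdd_iff_wellFoundedGT] at hNoeth ⊢
  let lead (I : StableSubgroup (oreAct act σ δ)) : ℕ →o StableSubgroup act :=
    { toFun d := ⟨untwistedLeadingCoeffNth σ I d,
        isStableAdd_untwistedLeadingCoeffNth I.2 hε hact hstable d⟩
      monotone' := monotone_untwistedLeadingCoeffNth I.2 hε hact hwsu }
  have lead_strictMono : StrictMono lead := fun I J hIJ =>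
    lt_of_le_not_ge (untwistedLeadingCoeffNth_mono σ hIJ.le) fun hJI =>
      hIJ.not_ge (le_of_untwistedLeadingCoeffNth_le hsurj hIJ.le hJI)
  have := wellFoundedGT_orderHom (ι := ℕ) (α := StableSubgroup act)
  exact lead_strictMono.wellFoundedGT

/-- Hilbert's basis theorem for Ore group extensions: Let
`B[x;σ,δ]` be an Ore group extension of an abelian group `B` with operators in
a set `A` with zero element (acting as `0`).  If `B` is stably Noetherian, the
action of `A` on `B` is weakly s-unital, and `σ` is a surjective `A`-stable
additive endomorphism of `B`, then `B[x;σ,δ]`, seen as a group with operators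
in `A[x]`, is stably Noetherian. -/
theorem stmt14 {A B : Type*} [Zero A] [AddCommGroup B] (act : A → B → B)
    (hadd : ∀ (a : A) (b₁ b₂ : B), act a (b₁ + b₂) = act a b₁ + act a b₂)
    (hε : ∀ b : B, act (0 : A) b = 0)
    (σ δ : B →+ B)
    (hNoeth : StablyNoetherianAdd act)
    (hwsu : ∀ b : B, b ∈ bracketAdd act {b})
    (hsurj : Function.Surjective ⇑σ)
    (hstable : ∀ (a : A) (b : B), ∃ a' : A, σ (act a b) = act a' (σ b)) :
    StablyNoetherianAdd (fun (α : ℕ →₀ A) (β : ℕ →₀ B) => oreAct act ⇑σ ⇑δ α β) := by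
  have hact (a : A) : act a 0 = 0 := (AddMonoidHom.mk' (act a) (hadd a)).map_zero
  exact stmt14_general act hact hε σ δ hNoeth hwsu hsurj hstable
end
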